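/- (Backward Substitution Lemma.) If there is a derivation Γ;Δ ⊢ M[N/x] : β in the multi-type system for the λI-calculus with x ∈ fv(M), then there exist a multiset type ᾱ, type environments Γᴹ and Γᴺ, and variable environments Δᴹ and Δᴺ, together with derivations (Γᴹ, x:ᾱ);(Δᴹ, x:⋃Δᴺ) ⊢ M : β and Γᴺ;Δᴺ ⊢! N : ᾱ, such that Γ = Γᴹ + Γᴺ, Δᴹ ≍ Δᴺ, and Δ = Δᴹ ∨ Δᴺ. -/

import Mathlib

set_option maxHeartbeats 1000000

/-! # λ-terms (named variables over ℕ) -/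

inductive Lam : Type
  | var : ℕ → Lam
  | app : Lam → Lam → Lam
  | lam : ℕ → Lam → Lam
deriving DecidableEq

namespace Lam

/-- Free variables of a λ-term. -/
def fv : Lam → Finset ℕ
  | var x => {x}
  | app M N => M.fv ∪ N.fv
  | lam x M => M.fv.erase x

/-- λI-terms: every abstraction `λx.M` satisfies `x ∈ fv M`. -/
def IsI : Lam → Prop
  | var _ => True
  | app M N => M.IsI ∧ N.IsI
  | lam x M => x ∈ M.fv ∧ M.IsI

/-- A variable not belonging to a given finite set. -/
def freshVar (s : Finset ℕ) : ℕ := (s.sup id) + 1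

/-- Capture-avoiding simultaneous substitution (bound variables are freshened). -/
def substF : Lam → (ℕ → Lam) → Lam
  | var x, σ => σ x
  | app M N, σ => app (M.substF σ) (N.substF σ)
  | lam x M, σ =>
      let y := freshVar ((M.fv.erase x).biUnion fun z => (σ z).fv)
      lam y (M.substF (Function.update σ x (var y)))

/-- Capture-avoiding substitution `M[N/x]`. -/
def subst (M : Lam) (x : ℕ) (N : Lam) : Lam :=
  M.substF fun z => if z = x then N else var z

/-- Being an abstraction. -/
def isAbs : Lam → Prop
  | lam _ _ => True
  | _ => False

end Lam

/-- One-step β-reduction. -/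
inductive Beta : Lam → Lam → Prop
  | beta (x : ℕ) (M N : Lam) : Beta (.app (.lam x M) N) (M.subst x N)
  | appL {M M' : Lam} (N : Lam) : Beta M M' → Beta (.app M N) (.app M' N)
  | appR {N N' : Lam} (M : Lam) : Beta N N' → Beta (.app M N) (.app M N')
  | lam (x : ℕ) {M M' : Lam} : Beta M M' → Beta (.lam x M) (.lam x M')

/-- One-step head reduction. -/
inductive Head : Lam → Lam → Prop
  | beta (x : ℕ) (M N : Lam) : Head (.app (.lam x M) N) (M.subst x N)
  | app {M M' : Lam} (N : Lam) : ¬ M.isAbs → Head M M' → Head (.app M N) (.app M' N)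
  | lam (x : ℕ) {M M' : Lam} : Head M M' → Head (.lam x M) (.lam x M')

/-- Iterated head reduction. -/
def HeadStar : Lam → Lam → Prop := Relation.ReflTransGen Head

/-- Terms of the shape `y M₁ ⋯ Mₖ`. -/
inductive Neutral : Lam → Prop
  | var (x : ℕ) : Neutral (.var x)
  | app {M : Lam} (N : Lam) : Neutral M → Neutral (.app M N)

/-- Head normal forms `λx₁…xₙ.y M₁ ⋯ Mₖ`. -/
inductive Hnf : Lam → Prop
  | neutral {M : Lam} : Neutral M → Hnf M
  | lam (x : ℕ) {M : Lam} : Hnf M → Hnf (.lam x M)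

/-- `M` has a head normal form. -/
def HasHnf (M : Lam) : Prop := ∃ H, HeadStar M H ∧ Hnf H

/-! # Multi-types -/

/-- Simple types: atoms `a ∈ ℕ`, arrows `[]_X → β` and `[α₀,…,αₙ] → β`. -/
inductive STy : Type
  | atom : ℕ → STy
  | arr0 : Finset ℕ → STy → STy
  | arrP : STy → List STy → STy → STy

/-- Multiset types: the annotated empty multiset `[]_X` or a
non-empty multiset `[α₀,…,αₙ]` (head plus tail). -/
inductive MTy : Type
  | empty : Finset ℕ → MTy
  | mk : STy → List STy → MTy

/-- The arrow type `ᾱ → β`. -/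
def MTy.arr : MTy → STy → STy
  | .empty X, β => .arr0 X β
  | .mk α l, β => .arrP α l β

/-- The underlying multiset of simple types of a multiset type. -/
def MTy.toM : MTy → Multiset STy
  | .empty _ => 0
  | .mk α l => α ::ₘ (l : Multiset STy)

/-- Multi-types: `σ ::= e_X | α`. -/
inductive OTy : Type
  | esum : Finset ℕ → OTy
  | simple : STy → OTy

mutual
/-- Atoms occurring in a simple type. -/
def STy.atoms : STy → Finset ℕ
  | .atom a => {a}
  | .arr0 _ β => β.atoms
  | .arrP α l β => α.atoms ∪ STy.atomsL l ∪ β.atoms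
def STy.atomsL : List STy → Finset ℕ
  | [] => ∅
  | α :: l => α.atoms ∪ STy.atomsL l
end

/-! # Environments -/

/-- Type environments: finitely supported maps from variables
to finite multisets of simple types; added pointwise. -/
abbrev TEnv := ℕ →₀ Multiset STy

/-- Variable environments: finite partial maps from variables to finite
sets of variables. -/
abbrev VEnv := Finmap (fun _ : ℕ => Finset ℕ)

namespace VEnv

/-- `⋃Δ`: the union of the values of `Δ`. -/
def uni (Δ : VEnv) : Finset ℕ :=
  Δ.keys.biUnion fun x => (Δ.lookup x).getD ∅

/-- Coherence `Δ₀ ≍ Δ₁`: agreement on the common domain. -/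
def Coh (Δ₀ Δ₁ : VEnv) : Prop :=
  ∀ x : ℕ, x ∈ Δ₀ → x ∈ Δ₁ → Δ₀.lookup x = Δ₁.lookup x

end VEnv

/-! # The multi-type system for the λI-calculus -/

mutual
/-- Typing judgement `Γ; Δ ⊢ M : σ`. -/
inductive Der : TEnv → VEnv → Lam → OTy → Prop
  | esum {Δ : VEnv} {M : Lam} :
      Δ.keys = M.fv → Der 0 Δ M (.esum Δ.uni)
  | ax (x : ℕ) (α : STy) (X : Finset ℕ) :
      Der (Finsupp.single x {α}) (Finmap.singleton x X) (.var x) (.simple α)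
  | app {Γ₀ Γ₁ : TEnv} {Δ₀ Δ₁ : VEnv} {M N : Lam} {m : MTy} {β : STy} :
      Der Γ₀ Δ₀ M (.simple (m.arr β)) → DerB Γ₁ Δ₁ N m → VEnv.Coh Δ₀ Δ₁ →
      Der (Γ₀ + Γ₁) (Δ₀ ∪ Δ₁) (.app M N) (.simple β)
  | lam0 {Γ : TEnv} {Δ : VEnv} {x : ℕ} {X : Finset ℕ} {M : Lam} {β : STy} :
      Γ x = 0 → x ∉ Δ → Der Γ (Δ.insert x X) M (.simple β) →
      Der Γ Δ (.lam x M) (.simple (.arr0 X β))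
  | lamP {Γ : TEnv} {Δ : VEnv} {x : ℕ} {X : Finset ℕ} {M : Lam} {α : STy}
      {l : List STy} {β : STy} :
      Γ x = 0 → x ∉ Δ →
      Der (Γ + Finsupp.single x (MTy.mk α l).toM) (Δ.insert x X) M (.simple β) →
      Der Γ Δ (.lam x M) (.simple (.arrP α l β))

/-- Typing judgement `Γ; Δ ⊢! M : ᾱ`. -/
inductive DerB : TEnv → VEnv → Lam → MTy → Prop
  | bang0 {Δ : VEnv} {M : Lam} :
      Δ.keys = M.fv → DerB 0 Δ M (.empty Δ.uni)
  | one {Γ : TEnv} {Δ : VEnv} {M : Lam} {α : STy} :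
      Der Γ Δ M (.simple α) → DerB Γ Δ M (.mk α [])
  | cons {Γ₀ Γ₁ : TEnv} {Δ : VEnv} {M : Lam} {α α' : STy} {l : List STy} :
      Der Γ₀ Δ M (.simple α) → DerB Γ₁ Δ M (.mk α' l) →
      DerB (Γ₀ + Γ₁) Δ M (.mk α (α' :: l))
end

/-- The multi-type interpretation `⟦M⟧`. -/
def interp (M : Lam) : Set (TEnv × VEnv × OTy) :=
  { p | Der p.1 p.2.1 M p.2.2 }

/-! # Ohana trees (coinductive equality, as a greatest fixpoint) -/

/-- Matching of the spines `y M₁ ⋯ Mₖ` of two head normal forms: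
same head variable, same number of arguments, arguments related by `R`. -/
inductive SpineMatch (R : Lam → Lam → Prop) : Lam → Lam → Prop
  | var (y : ℕ) : SpineMatch R (.var y) (.var y)
  | app {P Q M N : Lam} : SpineMatch R P Q → R M N →
      SpineMatch R (.app P M) (.app Q N)

/-- Matching of two head normal forms, comparing abstraction prefixes
up to renaming of the bound variables. -/
inductive HnfMatch (R : Lam → Lam → Prop) : Lam → Lam → Prop
  | base {P Q : Lam} : SpineMatch R P Q → HnfMatch R P Q
  | lam {x y : ℕ} {P Q : Lam} :
      (∀ z : ℕ, z ∉ (P.fv.erase x ∪ Q.fv.erase y) →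
        HnfMatch R (P.subst x (.var z)) (Q.subst y (.var z))) →
      HnfMatch R (.lam x P) (.lam y Q)

/-- `R` is an Ohana-tree bisimulation. -/
def OTBisim (R : Lam → Lam → Prop) : Prop :=
  ∀ M N, R M N →
    (¬ HasHnf M ∧ ¬ HasHnf N ∧ M.fv = N.fv) ∨
    (∃ P Q, HeadStar M P ∧ HeadStar N Q ∧ Hnf P ∧ Hnf Q ∧ HnfMatch R P Q)

/-- Equality of Ohana trees: `OT(M) = OT(N)`. -/
def OTEq (M N : Lam) : Prop := ∃ R, OTBisim R ∧ R M N

/-! # λI-resource terms -/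

mutual
inductive RTm : Type
  | var : ℕ → RTm
  | lam : ℕ → RTm → RTm
  | app : RTm → RBag → RTm
inductive RBag : Type
  | empty : Finset ℕ → RBag
  | mk : RTm → List RTm → RBag
end

noncomputable instance : DecidableEq RTm := fun _ _ => Classical.dec _
noncomputable instance : DecidableEq RBag := fun _ _ => Classical.dec _

mutual
/-- Free variables of a resource term. -/
def RTm.fv : RTm → Finset ℕ
  | .var x => {x}
  | .lam x s => s.fv.erase x
  | .app s b => s.fv ∪ b.fv
/-- Free variables of a bag. -/
def RBag.fv : RBag → Finset ℕ
  | .empty X => X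
  | .mk h t => h.fv ∪ RTm.fvL t
/-- Free variables of a list of resource terms. -/
def RTm.fvL : List RTm → Finset ℕ
  | [] => ∅
  | h :: t => h.fv ∪ RTm.fvL t
end

mutual
/-- λI-resource terms: in every abstraction `λx.s`, `x` occurs free in `s`. -/
inductive RTm.IsIr : RTm → Prop
  | var (x : ℕ) : RTm.IsIr (.var x)
  | lam {x : ℕ} {s : RTm} : x ∈ s.fv → RTm.IsIr s → RTm.IsIr (.lam x s)
  | app {s : RTm} {b : RBag} : RTm.IsIr s → RBag.IsIr b → RTm.IsIr (.app s b)
inductive RBag.IsIr : RBag → Prop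
  | empty (X : Finset ℕ) : RBag.IsIr (.empty X)
  | mk {h : RTm} {t : List RTm} : RTm.IsIr h → (∀ u ∈ t, RTm.IsIr u) →
      RBag.IsIr (.mk h t)
end

/-- The list of elements of a bag. -/
def RBag.toList : RBag → List RTm
  | .empty _ => []
  | .mk h t => h :: t

/-! Linear (bijective) substitution: `LSub s x ts t` means that `t` is obtained
by substituting the elements of the list `ts` for the free occurrences of `x`
in `s`, in left-to-right order (annotations of empty bags absorb). -/
mutual
inductive LSub : RTm → ℕ → List RTm → RTm → Prop
  | var_hit (x : ℕ) (t : RTm) : LSub (.var x) x [t] t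
  | var_miss {x y : ℕ} : y ≠ x → LSub (.var y) x [] (.var y)
  | lam {x y : ℕ} {s : RTm} {ts : List RTm} {s' : RTm} :
      y ≠ x → y ∉ RTm.fvL ts → LSub s x ts s' →
      LSub (.lam y s) x ts (.lam y s')
  | app {s : RTm} {b : RBag} {x : ℕ} {ts₁ ts₂ : List RTm} {s' : RTm} {b' : RBag} :
      LSub s x ts₁ s' → LSubB b x ts₂ b' →
      LSub (.app s b) x (ts₁ ++ ts₂) (.app s' b')
inductive LSubB : RBag → ℕ → List RTm → RBag → Prop
  | empty_hit {X : Finset ℕ} {x : ℕ} {ts : List RTm} :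
      x ∈ X → LSubB (.empty X) x ts (.empty ((X.erase x) ∪ RTm.fvL ts))
  | empty_miss {X : Finset ℕ} {x : ℕ} :
      x ∉ X → LSubB (.empty X) x [] (.empty X)
  | mk {h : RTm} {t : List RTm} {x : ℕ} {ts₁ ts₂ : List RTm} {h' : RTm}
      {t' : List RTm} :
      LSub h x ts₁ h' → LSubL t x ts₂ t' →
      LSubB (.mk h t) x (ts₁ ++ ts₂) (.mk h' t')
inductive LSubL : List RTm → ℕ → List RTm → List RTm → Prop
  | nil (x : ℕ) : LSubL [] x [] []
  | cons {h : RTm} {t : List RTm} {x : ℕ} {ts₁ ts₂ : List RTm} {h' : RTm}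
      {t' : List RTm} :
      LSub h x ts₁ h' → LSubL t x ts₂ t' →
      LSubL (h :: t) x (ts₁ ++ ts₂) (h' :: t')
end

/-- The root resource reduction step `(λx.s)b →r T`:
`T` is the sum of all results of bijective substitution of the elements
of `b` for the free occurrences of `x` in `s`. -/
def RootRed (x : ℕ) (s : RTm) (b : RBag) (T : Finset RTm) : Prop :=
  ∀ u : RTm, u ∈ T ↔ ∃ l : List RTm, l.Perm b.toList ∧ LSub s x l u

/-- Pushing an element on top of a bag. -/
def RBag.push (h : RTm) : RBag → RBag
  | .empty _ => .mk h []
  | .mk h' t => .mk h (h' :: t)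

mutual
/-- One-step resource reduction of a term to a finite sum. -/
inductive RStep : RTm → Finset RTm → Prop
  | root {x : ℕ} {s : RTm} {b : RBag} {T : Finset RTm} :
      RootRed x s b T → RStep (.app (.lam x s) b) T
  | appL {s : RTm} {T : Finset RTm} {b : RBag} :
      RStep s T → RStep (.app s b) (T.image fun s' => .app s' b)
  | appB {s : RTm} {b : RBag} {Tb : Finset RBag} :
      RStepB b Tb → RStep (.app s b) (Tb.image fun b' => .app s b')
  | lam {x : ℕ} {s : RTm} {T : Finset RTm} :
      RStep s T → RStep (.lam x s) (T.image fun s' => .lam x s')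
/-- One-step resource reduction inside a bag. -/
inductive RStepB : RBag → Finset RBag → Prop
  | head {h : RTm} {t : List RTm} {T : Finset RTm} :
      RStep h T → RStepB (.mk h t) (T.image fun h' => .mk h' t)
  | tail {h h₂ : RTm} {t : List RTm} {B : Finset RBag} :
      RStepB (.mk h₂ t) B → RStepB (.mk h (h₂ :: t)) (B.image (RBag.push h))
end

/-- One-step resource reduction on finite sums (linear extension). -/
inductive RRed : Finset RTm → Finset RTm → Prop
  | step {S : Finset RTm} {s : RTm} {T : Finset RTm} :
      s ∈ S → RStep s T → RRed S ((S.erase s) ∪ T)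

/-- `→r*`. -/
def RRedStar : Finset RTm → Finset RTm → Prop := Relation.ReflTransGen RRed

/-! # The resource multi-type system -/

mutual
/-- Resource typing judgement `Γ; Δ ⊢ s : α`. -/
inductive DerR : TEnv → VEnv → RTm → STy → Prop
  | ax (x : ℕ) (α : STy) (X : Finset ℕ) :
      DerR (Finsupp.single x {α}) (Finmap.singleton x X) (.var x) α
  | app {Γ₀ Γ₁ : TEnv} {Δ₀ Δ₁ : VEnv} {s : RTm} {b : RBag} {m : MTy} {β : STy} :
      DerR Γ₀ Δ₀ s (m.arr β) → DerRB Γ₁ Δ₁ b m → VEnv.Coh Δ₀ Δ₁ →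
      DerR (Γ₀ + Γ₁) (Δ₀ ∪ Δ₁) (.app s b) β
  | lam0 {Γ : TEnv} {Δ : VEnv} {x : ℕ} {X : Finset ℕ} {s : RTm} {β : STy} :
      Γ x = 0 → x ∉ Δ → DerR Γ (Δ.insert x X) s β →
      DerR Γ Δ (.lam x s) (.arr0 X β)
  | lamP {Γ : TEnv} {Δ : VEnv} {x : ℕ} {X : Finset ℕ} {s : RTm} {α : STy}
      {l : List STy} {β : STy} :
      Γ x = 0 → x ∉ Δ →
      DerR (Γ + Finsupp.single x (MTy.mk α l).toM) (Δ.insert x X) s β →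
      DerR Γ Δ (.lam x s) (.arrP α l β)
/-- Resource typing judgement `Γ; Δ ⊢! t̄ : ᾱ`. -/
inductive DerRB : TEnv → VEnv → RBag → MTy → Prop
  | bang0 {Δ : VEnv} : DerRB 0 Δ (.empty Δ.keys) (.empty Δ.uni)
  | one {Γ : TEnv} {Δ : VEnv} {t : RTm} {α : STy} :
      DerR Γ Δ t α → DerRB Γ Δ (.mk t []) (.mk α [])
  | cons {Γ₀ Γ₁ : TEnv} {Δ : VEnv} {t t' : RTm} {l : List RTm} {α α' : STy}
      {la : List STy} :
      DerR Γ₀ Δ t α → DerRB Γ₁ Δ (.mk t' l) (.mk α' la) →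
      DerRB (Γ₀ + Γ₁) Δ (.mk t (t' :: l)) (.mk α (α' :: la))
end

/-! # Taylor expansion -/

/-- `Taylor M s`: the resource term `s` belongs to the Taylor expansion `T(M)`. -/
inductive Taylor : Lam → RTm → Prop
  | var (x : ℕ) : Taylor (.var x) (.var x)
  | lam {M : Lam} {s : RTm} (x : ℕ) : Taylor M s → Taylor (.lam x M) (.lam x s)
  | app0 {M N : Lam} {s : RTm} : Taylor M s →
      Taylor (.app M N) (.app s (.empty N.fv))
  | appP {M N : Lam} {s t : RTm} {l : List RTm} :
      Taylor M s → Taylor N t → (∀ u ∈ l, Taylor N u) →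
      Taylor (.app M N) (.app s (.mk t l))

/-! # Miscellaneous constructions for the last statement -/

/-- The variable environment `Δ_id` mapping each `x ∈ s` to `{x}`. -/
def idEnv (s : Finset ℕ) : VEnv :=
  (s.sort (· ≤ ·)).foldr (fun x Δ => Δ.insert x ({x} : Finset ℕ)) ∅

/-- The term `y M₁ ⋯ Mₖ`. -/
def Lam.spineApp (y : ℕ) (l : List Lam) : Lam := l.foldl .app (.var y)

/-- The type `[]_{fv N₁} → ⋯ → []_{fv Nₖ} → a`. -/
def yTyRest (a : ℕ) : List Lam → STy
  | [] => .atom a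
  | N :: l => .arr0 N.fv (yTyRest a l)

/-- The type `[]_{fv M₁} → ⋯ → [α] → ⋯ → []_{fv Mₖ} → a`, with `[α]`
in the `i`-th argument position (0-based). -/
def yTy (α : STy) (a : ℕ) : List Lam → ℕ → STy
  | [], _ => .atom a
  | _ :: l, 0 => .arrP α [] (yTyRest a l)
  | N :: l, (i+1) => .arr0 N.fv (yTy α a l i)

/-! # Proof of the backward substitution lemma -/

/-- Finite partial map with domain `s` and values `f`. -/
def mkEnv (s : Finset ℕ) (f : ℕ → Finset ℕ) : VEnv :=
  (s.sort (· ≤ ·)).foldr (fun x Δ => Finmap.insert x (f x) Δ) ∅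

theorem lookup_foldr (l : List ℕ) (f : ℕ → Finset ℕ) (z : ℕ) :
    Finmap.lookup z (l.foldr (fun x (Δ : VEnv) => Finmap.insert x (f x) Δ) ∅)
      = if z ∈ l then some (f z) else none := by
  induction l with
  | nil => simp
  | cons a l ih =>
    simp only [List.foldr_cons, List.mem_cons]
    by_cases h : z = a
    · subst h; simp
    · rw [Finmap.lookup_insert_of_ne _ h, ih]; simp [h]

theorem lookup_mkEnv (s : Finset ℕ) (f : ℕ → Finset ℕ) (z : ℕ) :
    Finmap.lookup z (mkEnv s f) = if z ∈ s then some (f z) else none := by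
  unfold mkEnv
  rw [lookup_foldr]; simp

/-- Restriction of a variable environment. -/
def restr (Δ : VEnv) (s : Finset ℕ) : VEnv :=
  mkEnv (Δ.keys ∩ s) (fun z => (Δ.lookup z).getD ∅)

theorem lookup_restr (Δ : VEnv) (s : Finset ℕ) (z : ℕ) :
    Finmap.lookup z (restr Δ s) = if z ∈ s then Finmap.lookup z Δ else none := by
  unfold restr
  rw [lookup_mkEnv]
  by_cases h : z ∈ s
  · by_cases h2 : z ∈ Δ
    · obtain ⟨X, hX⟩ := Finmap.mem_iff.1 h2
      simp [h, Finmap.mem_keys, h2, hX]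
    · simp [h, Finmap.mem_keys, h2, Finmap.lookup_eq_none.2 h2]
  · simp [h]

theorem mem_uni (Δ : VEnv) (a : ℕ) :
    a ∈ Δ.uni ↔ ∃ z X, Finmap.lookup z Δ = some X ∧ a ∈ X := by
  unfold VEnv.uni
  simp only [Finset.mem_biUnion, Finmap.mem_keys]
  constructor
  · rintro ⟨z, hz, ha⟩
    obtain ⟨X, hX⟩ := Finmap.mem_iff.1 hz
    exact ⟨z, X, hX, by simpa [hX] using ha⟩
  · rintro ⟨z, X, hX, ha⟩
    exact ⟨z, Finmap.mem_iff.2 ⟨X, hX⟩, by simpa [hX] using ha⟩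

theorem keys_mkEnv (s : Finset ℕ) (f : ℕ → Finset ℕ) : (mkEnv s f).keys = s := by
  ext z
  rw [Finmap.mem_keys, Finmap.mem_iff, lookup_mkEnv]
  by_cases h : z ∈ s <;> simp [h]

theorem keys_restr (Δ : VEnv) (s : Finset ℕ) (h : s ⊆ Δ.keys) : (restr Δ s).keys = s := by
  unfold restr
  rw [keys_mkEnv]
  exact Finset.inter_eq_right.2 h

theorem mkEnv_congr {s : Finset ℕ} {f g : ℕ → Finset ℕ} (h : ∀ z ∈ s, f z = g z) :
    mkEnv s f = mkEnv s g := by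
  apply Finmap.ext_lookup
  intro z
  rw [lookup_mkEnv, lookup_mkEnv]
  by_cases hz : z ∈ s
  · simp [hz, h z hz]
  · simp [hz]

theorem restr_keys (Δ : VEnv) (s : Finset ℕ) (h : Δ.keys ⊆ s) : restr Δ s = Δ := by
  apply Finmap.ext_lookup
  intro z
  rw [lookup_restr]
  by_cases hz : z ∈ s
  · simp [hz]
  · have : z ∉ Δ := fun h' => hz (h (Finmap.mem_keys.2 h'))
    simp [hz, Finmap.lookup_eq_none.2 this]

mutual
theorem Der.keys_eq {Γ : TEnv} {Δ : VEnv} {M : Lam} {σ : OTy} :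
    Der Γ Δ M σ → Δ.keys = M.fv ∧ ∀ z, z ∉ M.fv → Γ z = 0
  | .esum h => ⟨h, fun _ _ => rfl⟩
  | .ax x α X => by
      refine ⟨by simp [Lam.fv], fun z hz => ?_⟩
      simp only [Lam.fv, Finset.mem_singleton] at hz
      simp [Finsupp.single_apply, Ne.symm hz]
  | .app h1 h2 _ => by
      have a := h1.keys_eq
      have b := h2.keys_eq
      refine ⟨by simp [Lam.fv, Finmap.keys_union, a.1, b.1], fun z hz => ?_⟩
      simp only [Lam.fv, Finset.mem_union, not_or] at hz
      simp [a.2 z hz.1, b.2 z hz.2]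
  | .lam0 (x := x) h1 h2 h3 => by
      have a := h3.keys_eq
      refine ⟨?_, fun z hz => ?_⟩
      · ext w
        have := congrArg (w ∈ ·) a.1
        simp only [Finmap.mem_keys, Finmap.mem_insert, eq_iff_iff] at this
        simp only [Lam.fv, Finset.mem_erase, Finmap.mem_keys, ← this]
        grind
      · simp only [Lam.fv, Finset.mem_erase, not_and] at hz
        by_cases h : z = x
        · rw [h, h1]
        · exact a.2 z (hz h)
  | .lamP (x := x) h1 h2 h3 => by
      have a := h3.keys_eq
      refine ⟨?_, fun z hz => ?_⟩
      · ext w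
        have := congrArg (w ∈ ·) a.1
        simp only [Finmap.mem_keys, Finmap.mem_insert, eq_iff_iff] at this
        simp only [Lam.fv, Finset.mem_erase, Finmap.mem_keys, ← this]
        grind
      · simp only [Lam.fv, Finset.mem_erase, not_and] at hz
        by_cases h : z = x
        · rw [h, h1]
        · have := a.2 z (hz h)
          simpa [Finsupp.single_apply, Ne.symm h] using this
theorem DerB.keys_eq {Γ : TEnv} {Δ : VEnv} {M : Lam} {m : MTy} :
    DerB Γ Δ M m → Δ.keys = M.fv ∧ ∀ z, z ∉ M.fv → Γ z = 0
  | .bang0 h => ⟨h, fun _ _ => rfl⟩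
  | .one h => h.keys_eq
  | .cons h1 h2 => by
      have a := h1.keys_eq
      have b := h2.keys_eq
      exact ⟨a.1, fun z hz => by simp [a.2 z hz, b.2 z hz]⟩
end

/-- A list of derivations for the same term. -/
inductive DL (Δ : VEnv) (N : Lam) : TEnv → List STy → Prop
  | nil : DL Δ N 0 []
  | cons {Γ₀ Γ₁ : TEnv} {α : STy} {l : List STy} :
      Der Γ₀ Δ N (.simple α) → DL Δ N Γ₁ l → DL Δ N (Γ₀ + Γ₁) (α :: l)

theorem DL.append {Δ : VEnv} {N : Lam} {Γ₀ Γ₁ : TEnv} {l₀ l₁ : List STy}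
    (h₀ : DL Δ N Γ₀ l₀) (h₁ : DL Δ N Γ₁ l₁) : DL Δ N (Γ₀ + Γ₁) (l₀ ++ l₁) := by
  induction h₀ with
  | nil => simpa using h₁
  | cons a _ ih => rw [add_assoc]; exact DL.cons a ih

theorem DL.nil_eq {Δ : VEnv} {N : Lam} {Γ : TEnv} (h : DL Δ N Γ []) : Γ = 0 := by
  cases h; rfl

theorem DL.supp {Δ : VEnv} {N : Lam} {Γ : TEnv} {l : List STy} (h : DL Δ N Γ l) :
    ∀ z, z ∉ N.fv → Γ z = 0 := by
  induction h with
  | nil => intros; rfl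
  | cons a _ ih => intro z hz; simp [a.keys_eq.2 z hz, ih z hz]

theorem DL.var {Δ : VEnv} {y : ℕ} {Γ : TEnv} {l : List STy} (h : DL Δ (.var y) Γ l) :
    Γ = Finsupp.single y (l : Multiset STy) := by
  induction h with
  | nil => simp
  | cons a _ ih =>
    rw [ih]; cases a
    rw [← Finsupp.single_add]; rfl

/-- Multiset type from a list. -/
def MTy.ofList (X : Finset ℕ) : List STy → MTy
  | [] => .empty X
  | α :: l => .mk α l

theorem MTy.toM_ofList (X : Finset ℕ) (l : List STy) :
    (MTy.ofList X l).toM = (l : Multiset STy) := by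
  cases l <;> rfl

theorem DL.toB {Δ : VEnv} {N : Lam} {Γ : TEnv} {l : List STy} (h : DL Δ N Γ l)
    (hk : Δ.keys = N.fv) : DerB Γ Δ N (MTy.ofList Δ.uni l) := by
  induction h with
  | nil => exact DerB.bang0 hk
  | @cons _ _ _ l a b ih =>
    cases l with
    | nil => rw [b.nil_eq, add_zero]; exact DerB.one a
    | cons _ _ => exact DerB.cons a ih

theorem freshVar_notMem (s : Finset ℕ) : Lam.freshVar s ∉ s := by
  intro h
  have := Finset.le_sup (f := id) h
  simp only [Lam.freshVar, id] at this
  omega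

theorem fv_substF (M : Lam) : ∀ σ : ℕ → Lam,
    (M.substF σ).fv = M.fv.biUnion fun z => (σ z).fv := by
  induction M with
  | var x => intro σ; simp [Lam.substF, Lam.fv]
  | app P Q ihP ihQ =>
    intro σ; simp [Lam.substF, Lam.fv, ihP, ihQ, Finset.union_biUnion]
  | lam x P ih =>
    intro σ
    simp only [Lam.substF, Lam.fv, ih]
    have hy := freshVar_notMem ((P.fv.erase x).biUnion fun z => (σ z).fv)
    generalize Lam.freshVar ((P.fv.erase x).biUnion fun z => (σ z).fv) = y at hy ⊢
    ext w
    simp only [Finset.mem_biUnion, Finset.mem_erase, not_exists, not_and] at hy ⊢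
    constructor
    · rintro ⟨hw, z, hz, hwz⟩
      by_cases h : z = x
      · subst h; simp [Lam.fv, hw] at hwz
      · rw [Function.update_of_ne h] at hwz
        exact ⟨z, ⟨h, hz⟩, hwz⟩
    · rintro ⟨z, ⟨h, hz⟩, hwz⟩
      refine ⟨?_, z, hz, by rwa [Function.update_of_ne h]⟩
      rintro rfl
      exact hy z ⟨h, hz⟩ hwz

/-- The variable environment for `M` induced by one for `M.substF σ`. -/
def pull (Δ : VEnv) (σ : ℕ → Lam) (M : Lam) : VEnv :=
  mkEnv M.fv fun z => (restr Δ (σ z).fv).uni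

/-- The type environment induced by a family of lists. -/
noncomputable def tenv (s : Finset ℕ) (L : ℕ → List STy) : TEnv :=
  ∑ z ∈ s, Finsupp.single z (L z : Multiset STy)

/-- Decomposition data of a type environment along a substitution. -/
def Dec (Γ : TEnv) (Δ : VEnv) (σ : ℕ → Lam) (M : Lam) (L : ℕ → List STy) : Prop :=
  ∃ G : ℕ → TEnv, (∀ z, DL (restr Δ (σ z).fv) (σ z) (G z) (L z)) ∧
    (∀ z, z ∉ M.fv → L z = []) ∧ Γ = ∑ z ∈ M.fv, G z

theorem Dec.zero (Δ : VEnv) (σ : ℕ → Lam) (M : Lam) : Dec 0 Δ σ M (fun _ => []) :=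
  ⟨fun _ => 0, fun _ => DL.nil, fun _ _ => rfl, by simp⟩

theorem tenv_append (s : Finset ℕ) (L₀ L₁ : ℕ → List STy) :
    tenv s (fun z => L₀ z ++ L₁ z) = tenv s L₀ + tenv s L₁ := by
  simp only [tenv, ← Finset.sum_add_distrib, ← Finsupp.single_add, Multiset.coe_add]

theorem tenv_subset {s t : Finset ℕ} (L : ℕ → List STy) (hst : s ⊆ t)
    (h : ∀ z, z ∉ s → L z = []) : tenv s L = tenv t L := by
  unfold tenv
  apply Finset.sum_subset hst
  intro z _ hz
  simp [h z hz]

theorem Dec.add {Γ₀ Γ₁ : TEnv} {Δ : VEnv} {σ : ℕ → Lam} {M : Lam} {L₀ L₁ : ℕ → List STy}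
    (h₀ : Dec Γ₀ Δ σ M L₀) (h₁ : Dec Γ₁ Δ σ M L₁) :
    Dec (Γ₀ + Γ₁) Δ σ M (fun z => L₀ z ++ L₁ z) := by
  obtain ⟨G₀, a₀, b₀, rfl⟩ := h₀
  obtain ⟨G₁, a₁, b₁, rfl⟩ := h₁
  exact ⟨fun z => G₀ z + G₁ z, fun z => (a₀ z).append (a₁ z),
    fun z hz => by simp [b₀ z hz, b₁ z hz], by simp [Finset.sum_add_distrib]⟩

theorem Dec.mono {Γ : TEnv} {Δ Δ' : VEnv} {σ : ℕ → Lam} {M M' : Lam} {L : ℕ → List STy}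
    (h : Dec Γ Δ σ M L) (hM : M.fv ⊆ M'.fv)
    (hΔ : ∀ z ∈ M.fv, restr Δ (σ z).fv = restr Δ' (σ z).fv) : Dec Γ Δ' σ M' L := by
  obtain ⟨G, a, b, rfl⟩ := h
  have hG : ∀ z, z ∉ M.fv → G z = 0 := fun z hz => by
    have := a z
    rw [b z hz] at this
    exact this.nil_eq
  refine ⟨G, fun z => ?_, fun z hz => b z fun h => hz (hM h), ?_⟩
  · by_cases hz : z ∈ M.fv
    · rw [← hΔ z hz]; exact a z
    · rw [b z hz, hG z hz]; exact DL.nil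
  · exact Finset.sum_subset hM fun z _ hz => hG z hz

theorem uni_pull {Δ : VEnv} {σ : ℕ → Lam} {M : Lam} (h : Δ.keys = (M.substF σ).fv) :
    (pull Δ σ M).uni = Δ.uni := by
  ext a
  simp only [mem_uni, pull, lookup_mkEnv]
  constructor
  · rintro ⟨z, X, hX, ha⟩
    by_cases hz : z ∈ M.fv
    · simp only [hz, if_true, Option.some.injEq] at hX
      subst hX
      obtain ⟨w, Y, hw, ha⟩ := (mem_uni _ _).1 ha
      rw [lookup_restr] at hw
      by_cases hwz : w ∈ (σ z).fv
      · exact ⟨w, Y, by simpa [hwz] using hw, ha⟩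
      · simp [hwz] at hw
    · simp [hz] at hX
  · rintro ⟨w, Y, hw, ha⟩
    have hk : w ∈ Δ.keys := Finmap.mem_keys.2 (Finmap.mem_iff.2 ⟨Y, hw⟩)
    rw [h, fv_substF, Finset.mem_biUnion] at hk
    obtain ⟨z, hz, hwz⟩ := hk
    refine ⟨z, _, by rw [if_pos hz], (mem_uni _ _).2 ⟨w, Y, ?_, ha⟩⟩
    simp [lookup_restr, hwz, hw]

/-- The main property for a single term. -/
def Good (M : Lam) : Prop := ∀ (σ : ℕ → Lam) (Γ : TEnv) (Δ : VEnv) (β : STy),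
  Der Γ Δ (M.substF σ) (.simple β) →
    ∃ L, Dec Γ Δ σ M L ∧ Der (tenv M.fv L) (pull Δ σ M) M (.simple β)

theorem Good.bang {M : Lam} (hM : Good M) (σ : ℕ → Lam) {Δ : VEnv} {l : List STy} :
    ∀ {Γ : TEnv} {α : STy}, DerB Γ Δ (M.substF σ) (.mk α l) →
    ∃ L, Dec Γ Δ σ M L ∧ DerB (tenv M.fv L) (pull Δ σ M) M (.mk α l) := by
  induction l with
  | nil =>
    intro Γ α h
    cases h with
    | one h =>
      obtain ⟨L, a, b⟩ := hM _ _ _ _ h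
      exact ⟨L, a, .one b⟩
  | cons α' l ih =>
    intro Γ α h
    cases h with
    | cons h1 h2 =>
      obtain ⟨L, a, b⟩ := hM _ _ _ _ h1
      obtain ⟨L', a', b'⟩ := ih h2
      refine ⟨_, a.add a', ?_⟩
      rw [tenv_append]
      exact .cons b b'

theorem Good.bang' {M : Lam} (hM : Good M) (σ : ℕ → Lam) {Δ : VEnv} {m : MTy}
    {Γ : TEnv} (h : DerB Γ Δ (M.substF σ) m) :
    ∃ L, Dec Γ Δ σ M L ∧ DerB (tenv M.fv L) (pull Δ σ M) M m := by
  cases m with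
  | mk α l => exact hM.bang σ h
  | empty X =>
    cases h with
    | bang0 hk =>
      refine ⟨_, Dec.zero _ _ _, ?_⟩
      have : tenv M.fv (fun _ => []) = 0 := by simp [tenv]
      rw [this, ← uni_pull hk]
      exact .bang0 (keys_mkEnv _ _)

theorem Good.app {P Q : Lam} (hP : Good P) (hQ : Good Q) : Good (.app P Q) := by
  intro σ Γ Δ β h
  simp only [Lam.substF] at h
  cases h with
  | @app Γ₀ Γ₁ Δ₀ Δ₁ _ _ m _ h1 h2 hc =>
    obtain ⟨L₀, a₀, b₀⟩ := hP _ _ _ _ h1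
    obtain ⟨L₁, a₁, b₁⟩ := hQ.bang' _ h2
    have k₀ := h1.keys_eq.1
    have k₁ := h2.keys_eq.1
    rw [fv_substF] at k₀ k₁
    have r₀ : ∀ z ∈ P.fv, restr Δ₀ (σ z).fv = restr (Δ₀ ∪ Δ₁) (σ z).fv := by
      intro z hz
      apply Finmap.ext_lookup
      intro w
      rw [lookup_restr, lookup_restr]
      by_cases hw : w ∈ (σ z).fv
      · have : w ∈ Δ₀ := by
          rw [← Finmap.mem_keys, k₀]; exact Finset.mem_biUnion.2 ⟨z, hz, hw⟩
        simp [hw, Finmap.lookup_union_left this]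
      · simp [hw]
    have r₁ : ∀ z ∈ Q.fv, restr Δ₁ (σ z).fv = restr (Δ₀ ∪ Δ₁) (σ z).fv := by
      intro z hz
      apply Finmap.ext_lookup
      intro w
      rw [lookup_restr, lookup_restr]
      by_cases hw : w ∈ (σ z).fv
      · have h1 : w ∈ Δ₁ := by
          rw [← Finmap.mem_keys, k₁]; exact Finset.mem_biUnion.2 ⟨z, hz, hw⟩
        by_cases h0 : w ∈ Δ₀
        · simp [hw, Finmap.lookup_union_left h0, hc w h0 h1]
        · simp [hw, Finmap.lookup_union_right h0]
      · simp [hw]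
    have s₀ : P.fv ⊆ (Lam.app P Q).fv := Finset.subset_union_left
    have s₁ : Q.fv ⊆ (Lam.app P Q).fv := Finset.subset_union_right
    have d₀ := a₀.mono s₀ r₀
    have d₁ := a₁.mono s₁ r₁
    refine ⟨_, d₀.add d₁, ?_⟩
    have z₀ : ∀ z, z ∉ P.fv → L₀ z = [] := by obtain ⟨_, _, h, _⟩ := a₀; exact h
    have z₁ : ∀ z, z ∉ Q.fv → L₁ z = [] := by obtain ⟨_, _, h, _⟩ := a₁; exact h
    rw [tenv_append, ← tenv_subset L₀ s₀ z₀, ← tenv_subset L₁ s₁ z₁]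
    have e₀ : pull Δ₀ σ P = mkEnv P.fv fun z => (restr (Δ₀ ∪ Δ₁) (σ z).fv).uni :=
      mkEnv_congr fun z hz => by rw [r₀ z hz]
    have e₁ : pull Δ₁ σ Q = mkEnv Q.fv fun z => (restr (Δ₀ ∪ Δ₁) (σ z).fv).uni :=
      mkEnv_congr fun z hz => by rw [r₁ z hz]
    have e : pull (Δ₀ ∪ Δ₁) σ (.app P Q) = pull Δ₀ σ P ∪ pull Δ₁ σ Q := by
      rw [e₀, e₁]
      apply Finmap.ext_lookup
      intro z
      rw [pull, lookup_mkEnv]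
      by_cases h0 : z ∈ P.fv
      · rw [Finmap.lookup_union_left (by rw [← Finmap.mem_keys, keys_mkEnv]; exact h0),
          lookup_mkEnv]
        simp [Lam.fv, h0]
      · rw [Finmap.lookup_union_right (by rw [← Finmap.mem_keys, keys_mkEnv]; exact h0),
          lookup_mkEnv]
        simp [Lam.fv, h0]
    rw [e]
    refine .app b₀ b₁ ?_
    intro z hz0 hz1
    rw [e₀, ← Finmap.mem_keys, keys_mkEnv] at hz0
    rw [e₁, ← Finmap.mem_keys, keys_mkEnv] at hz1
    rw [e₀, e₁, lookup_mkEnv, lookup_mkEnv, if_pos hz0, if_pos hz1]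

theorem Good.var (x : ℕ) : Good (.var x) := by
  intro σ Γ Δ β h
  simp only [Lam.substF] at h
  have hr : restr Δ (σ x).fv = Δ := restr_keys _ _ (by rw [h.keys_eq.1])
  refine ⟨fun z => if z = x then [β] else [],
    ⟨fun z => if z = x then Γ else 0, ?_, ?_, ?_⟩, ?_⟩
  · intro z
    by_cases hz : z = x
    · subst hz
      simp only [if_true, hr]
      simpa using DL.cons h DL.nil
    · simp only [hz, if_false]; exact DL.nil
  · intro z hz
    simp only [Lam.fv, Finset.mem_singleton] at hz
    simp [hz]
  · simp [Lam.fv]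
  · have e : pull Δ σ (.var x) = Finmap.singleton x Δ.uni := by
      apply Finmap.ext_lookup
      intro z
      rw [pull, lookup_mkEnv]
      by_cases hz : z = x
      · subst hz; simp [Lam.fv, hr]
      · rw [Finmap.lookup_eq_none.2 (by simpa using hz)]; simp [Lam.fv, hz]
    rw [e]
    have : tenv (Lam.var x).fv (fun z => if z = x then [β] else []) = Finsupp.single x {β} := by
      simp [tenv, Lam.fv]
    rw [this]
    exact .ax _ _ _

/-- Common part of the two abstraction cases. -/
theorem lam_core {P : Lam} (hP : Good P) (σ : ℕ → Lam) (x y : ℕ) (Γ : TEnv) (Δ : VEnv)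
    (X : Finset ℕ) (μ : Multiset STy) (β : STy)
    (hy : y ∉ (P.fv.erase x).biUnion fun z => (σ z).fv)
    (h1 : Γ y = 0) (h2 : y ∉ Δ)
    (h : Der (Γ + Finsupp.single y μ) (Δ.insert y X)
      (P.substF (Function.update σ x (.var y))) (.simple β)) :
    ∃ L, Dec Γ Δ σ (.lam x P) L ∧ tenv (P.fv.erase x) L x = 0 ∧
      x ∉ pull Δ σ (.lam x P) ∧
      Der (tenv (P.fv.erase x) L + Finsupp.single x μ)
        ((pull Δ σ (.lam x P)).insert x X) P (.simple β) := by
  obtain ⟨L, ⟨G, a, b, hs⟩, d⟩ := hP _ _ _ _ h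
  have hyz : ∀ z ∈ P.fv, z ≠ x → y ∉ (σ z).fv := fun z hz hzx hyz =>
    hy (Finset.mem_biUnion.2 ⟨z, Finset.mem_erase.2 ⟨hzx, hz⟩, hyz⟩)
  have hx : x ∈ P.fv := by
    have k := h.keys_eq.1
    have : y ∈ (Δ.insert y X).keys := by rw [Finmap.mem_keys]; simp
    rw [k, fv_substF, Finset.mem_biUnion] at this
    obtain ⟨z, hz, hyz'⟩ := this
    by_cases hzx : z = x
    · rwa [← hzx]
    · rw [Function.update_of_ne hzx] at hyz'
      exact absurd hyz' (hyz z hz hzx)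
  have hr : ∀ z ∈ P.fv, z ≠ x → restr (Δ.insert y X) (σ z).fv = restr Δ (σ z).fv := by
    intro z hz hzx
    apply Finmap.ext_lookup
    intro w
    rw [lookup_restr, lookup_restr]
    by_cases hw : w ∈ (σ z).fv
    · have : w ≠ y := by rintro rfl; exact hyz z hz hzx hw
      rw [Finmap.lookup_insert_of_ne _ this]
    · simp [hw]
  have az : ∀ z ∈ P.fv, z ≠ x → DL (restr Δ (σ z).fv) (σ z) (G z) (L z) := by
    intro z hz hzx
    have := a z
    rwa [Function.update_of_ne hzx, hr z hz hzx] at this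
  have ax := a x
  rw [Function.update_self] at ax
  have gx := ax.var
  rw [← Finset.sum_erase_add _ _ hx, gx] at hs
  have hsy : (∑ z ∈ P.fv.erase x, G z) y = 0 := by
    rw [Finsupp.finset_sum_apply]
    apply Finset.sum_eq_zero
    intro z hz
    rw [Finset.mem_erase] at hz
    exact (az z hz.2 hz.1).supp y (hyz z hz.2 hz.1)
  have hμ : μ = (L x : Multiset STy) := by
    have := DFunLike.congr_fun hs y
    rw [Finsupp.add_apply, Finsupp.add_apply, hsy, h1] at this
    simpa using this
  rw [hμ] at hs
  have hΓ : Γ = ∑ z ∈ P.fv.erase x, G z := add_right_cancel hs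
  let L' : ℕ → List STy := fun z => if z = x then [] else L z
  have ht : tenv (P.fv.erase x) L' = tenv (P.fv.erase x) L := by
    unfold tenv
    apply Finset.sum_congr rfl
    intro z hz
    simp [L', (Finset.mem_erase.1 hz).1]
  refine ⟨L', ⟨fun z => if z ∈ P.fv.erase x then G z else 0, ?_, ?_, ?_⟩, ?_, ?_, ?_⟩
  · intro z
    by_cases hzx : z = x
    · simp only [L', hzx, Finset.notMem_erase, if_false, if_true]; exact DL.nil
    · by_cases hz : z ∈ P.fv
      · simpa [L', hzx, hz] using az z hz hzx
      · simp only [L', hzx, hz, Finset.mem_erase, if_false, and_false, b z hz]; exact DL.nil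
  · intro z hz
    simp only [Lam.fv, Finset.mem_erase, not_and] at hz
    by_cases hzx : z = x
    · simp [L', hzx]
    · simp [L', hzx, b z (hz hzx)]
  · rw [hΓ]
    simp only [Lam.fv]
    exact Finset.sum_congr rfl fun z hz => by simp only [hz, if_true]
  · unfold tenv
    rw [Finsupp.finset_sum_apply]
    apply Finset.sum_eq_zero
    intro z hz
    simp [Finsupp.single_apply, (Finset.mem_erase.1 hz).1]
  · rw [← Finmap.mem_keys, pull, keys_mkEnv]; simp [Lam.fv]
  · have e1 : tenv (P.fv.erase x) L' + Finsupp.single x μ = tenv P.fv L := by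
      rw [ht, hμ]
      unfold tenv
      exact Finset.sum_erase_add P.fv (fun z => Finsupp.single z (L z : Multiset STy)) hx
    have e2 : (pull Δ σ (.lam x P)).insert x X
        = pull (Δ.insert y X) (Function.update σ x (.var y)) P := by
      apply Finmap.ext_lookup
      intro z
      by_cases hzx : z = x
      · subst hzx
        rw [Finmap.lookup_insert, pull, lookup_mkEnv, if_pos hx, Function.update_self]
        congr 1
        ext c
        rw [mem_uni]
        constructor
        · intro hc
          exact ⟨y, X, by simp [lookup_restr, Lam.fv], hc⟩
        · rintro ⟨w, Y, hw, hc⟩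
          rw [lookup_restr] at hw
          by_cases hwy : w = y
          · subst hwy
            simp [Lam.fv] at hw
            rwa [hw]
          · simp [Lam.fv, hwy] at hw
      · rw [Finmap.lookup_insert_of_ne _ hzx, pull, pull, lookup_mkEnv, lookup_mkEnv,
          Function.update_of_ne hzx]
        by_cases hz : z ∈ P.fv
        · simp [Lam.fv, hz, hzx, hr z hz hzx]
        · simp [Lam.fv, hz]
    rw [e1, e2]
    exact d

theorem Good.lam (x : ℕ) {P : Lam} (hP : Good P) : Good (.lam x P) := by
  intro σ Γ Δ β h
  simp only [Lam.substF] at h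
  have hy := freshVar_notMem ((P.fv.erase x).biUnion fun z => (σ z).fv)
  generalize Lam.freshVar ((P.fv.erase x).biUnion fun z => (σ z).fv) = y at hy h
  cases h with
  | @lam0 _ _ _ X _ β h1 h2 h3 =>
    obtain ⟨L, d, e, f, g⟩ := lam_core hP σ x y Γ Δ X 0 β hy h1 h2 (by simpa using h3)
    exact ⟨L, d, .lam0 e f (by simpa [Lam.fv] using g)⟩
  | @lamP _ _ _ X _ α l β h1 h2 h3 =>
    obtain ⟨L, d, e, f, g⟩ := lam_core hP σ x y Γ Δ X _ β hy h1 h2 h3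
    exact ⟨L, d, .lamP e f g⟩

theorem good (M : Lam) : Good M := by
  induction M with
  | var x => exact Good.var x
  | app P Q hP hQ => exact hP.app hQ
  | lam x P hP => exact hP.lam x

/-- Backward Substitution Lemma. -/
theorem stmt4 (Γ : TEnv) (Δ : VEnv) (M N : Lam) (x : ℕ) (β : STy)
    (hM : M.IsI) (hN : N.IsI) (hx : x ∈ M.fv)
    (h : Der Γ Δ (M.subst x N) (.simple β)) :
    ∃ (m : MTy) (ΓM ΓN : TEnv) (ΔM ΔN : VEnv),
      ΓM x = 0 ∧ x ∉ ΔM ∧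
      Der (ΓM + Finsupp.single x m.toM) (ΔM.insert x (VEnv.uni ΔN)) M (.simple β) ∧
      DerB ΓN ΔN N m ∧
      Γ = ΓM + ΓN ∧ VEnv.Coh ΔM ΔN ∧ Δ = ΔM ∪ ΔN := by
  obtain ⟨L, ⟨G, a, b, hs⟩, d⟩ := good M _ _ _ _ h
  have k := h.keys_eq.1
  unfold Lam.subst at k
  rw [fv_substF] at k
  have hsub : ∀ z ∈ M.fv, ((fun z => if z = x then N else Lam.var z) z).fv ⊆ Δ.keys := by
    intro z hz
    rw [k]
    exact Finset.subset_biUnion_of_mem (fun z => ((fun z => if z = x then N else Lam.var z) z).fv) hz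
  have hNk : N.fv ⊆ Δ.keys := by simpa using hsub x hx
  have kN := keys_restr Δ N.fv hNk
  have ax := a x
  simp only [if_true] at ax
  have gz : ∀ z, z ≠ x → G z = Finsupp.single z (L z : Multiset STy) := by
    intro z hz
    have := a z
    simp only [hz, if_false] at this
    exact this.var
  have hzk : ∀ z ∈ M.fv, z ≠ x → z ∈ Δ := by
    intro z hz hzx
    have := hsub z hz
    simp only [hzx, if_false, Lam.fv, Finset.singleton_subset_iff] at this
    exact Finmap.mem_keys.1 this
  have mR : ∀ w, w ∈ restr Δ (M.fv.erase x) ↔ w ∈ M.fv.erase x := by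
    intro w
    rw [← Finmap.mem_keys, keys_restr]
    intro z hz
    exact Finmap.mem_keys.2 (hzk z (Finset.mem_erase.1 hz).2 (Finset.mem_erase.1 hz).1)
  refine ⟨MTy.ofList (restr Δ N.fv).uni (L x), tenv (M.fv.erase x) L, G x,
    restr Δ (M.fv.erase x), restr Δ N.fv, ?_, ?_, ?_, ax.toB kN, ?_, ?_, ?_⟩
  · unfold tenv
    rw [Finsupp.finset_sum_apply]
    apply Finset.sum_eq_zero
    intro z hz
    simp [Finsupp.single_apply, (Finset.mem_erase.1 hz).1]
  · rw [mR]; simp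
  · rw [MTy.toM_ofList]
    have e1 : tenv (M.fv.erase x) L + Finsupp.single x (L x : Multiset STy) = tenv M.fv L :=
      Finset.sum_erase_add M.fv (fun z => Finsupp.single z (L z : Multiset STy)) hx
    rw [e1]
    convert d using 1
    apply Finmap.ext_lookup
    intro z
    rw [pull, lookup_mkEnv]
    by_cases hzx : z = x
    · subst hzx
      rw [Finmap.lookup_insert]; simp [hx]
    · rw [Finmap.lookup_insert_of_ne _ hzx, lookup_restr]
      by_cases hz : z ∈ M.fv
      · simp only [Finset.mem_erase, ne_eq, hzx, not_false_eq_true, hz, and_self, if_true, if_false]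
        obtain ⟨X, hX⟩ := Finmap.mem_iff.1 (hzk z hz hzx)
        rw [hX]
        congr 1
        ext c
        rw [mem_uni]
        constructor
        · intro hc
          exact ⟨z, X, by simp [lookup_restr, Lam.fv, hX], hc⟩
        · rintro ⟨w, Y, hw, hc⟩
          rw [lookup_restr] at hw
          by_cases hwz : w = z
          · subst hwz
            simp [Lam.fv, hX] at hw
            rwa [hw]
          · simp [Lam.fv, hwz] at hw
      · simp [hz]
  · rw [hs, ← Finset.sum_erase_add _ _ hx]
    congr 1
    exact Finset.sum_congr rfl fun z hz => gz z (Finset.mem_erase.1 hz).1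
  · intro z h0 h1
    rw [mR] at h0
    rw [← Finmap.mem_keys, kN] at h1
    rw [lookup_restr, lookup_restr, if_pos h0, if_pos h1]
  · apply Finmap.ext_lookup
    intro z
    by_cases h0 : z ∈ M.fv.erase x
    · rw [Finmap.lookup_union_left ((mR z).2 h0), lookup_restr, if_pos h0]
    · rw [Finmap.lookup_union_right (fun h => h0 ((mR z).1 h)), lookup_restr]
      by_cases h1 : z ∈ N.fv
      · rw [if_pos h1]
      · rw [if_neg h1, Finmap.lookup_eq_none, ← Finmap.mem_keys, k, Finset.mem_biUnion]
        rintro ⟨w, hw, hzw⟩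
        by_cases hwx : w = x
        · simp [hwx] at hzw; exact h1 hzw
        · simp [hwx, Lam.fv] at hzw
          subst hzw
          exact h0 (Finset.mem_erase.2 ⟨hwx, hw⟩)
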